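/- arXiv:1110.5071 — 5 statements merged into one kernel-verified Lean document; each statement's English description precedes it below -/
import Mathlib

section
/- Let I ⊂ ℝ be an interval, let a, φ : I → ℝ and α, μ : I → (0,∞) be C¹ functions, write g(t) = (a(t), α(t), φ(t), μ(t)), and let u : ℝ → ℂ be a C¹ function. Then for all t ∈ I and x ∈ ℝ, ∂_t[(g(t)·u)(x)] = (g(t)·(Y(t)u))(x), where Y(t)u := a′(t)μ(t) (e₁·u) + (α′(t)/α(t)) (e₂·u) + φ′(t) (e₃·u) + (μ′(t)/μ(t)) (e₄·u). -/
open MeasureTheory Filter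

noncomputable section

/-- `e₁·u = -u'` -/
def e1 (u : ℝ → ℂ) : ℝ → ℂ := fun x => -deriv u x
/-- `e₂·u = u` -/
def e2 (u : ℝ → ℂ) : ℝ → ℂ := u
/-- `e₃·u = iu` -/
def e3 (u : ℝ → ℂ) : ℝ → ℂ := fun x => Complex.I * u x
/-- `e₄·u = (xu)'` -/
def e4 (u : ℝ → ℂ) : ℝ → ℂ := fun x => deriv (fun y : ℝ => (y : ℂ) * u y) x

/-- The group action `(g·u)(x) = e^{iφ} α μ u(μ(x-a))`. -/
def gact (a α φ μ : ℝ) (u : ℝ → ℂ) : ℝ → ℂ :=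
  fun x => Complex.exp (Complex.I * φ) * α * μ * u (μ * (x - a))

/-- `d/dt (g(t)·u) = g(t)·(Y(t)u)` where
`Y(t) = a'μ e₁ + (α'/α) e₂ + φ' e₃ + (μ'/μ) e₄`. -/
theorem statement4
    (I : Set ℝ) (hI : I.OrdConnected)
    (a α φ μ a' α' φ' μ' : ℝ → ℝ)
    (ha : ∀ t ∈ I, HasDerivWithinAt a (a' t) I t)
    (hα : ∀ t ∈ I, HasDerivWithinAt α (α' t) I t)
    (hφ : ∀ t ∈ I, HasDerivWithinAt φ (φ' t) I t)
    (hμ : ∀ t ∈ I, HasDerivWithinAt μ (μ' t) I t)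
    (hca : ContinuousOn a' I) (hcα : ContinuousOn α' I)
    (hcφ : ContinuousOn φ' I) (hcμ : ContinuousOn μ' I)
    (hαpos : ∀ t ∈ I, 0 < α t) (hμpos : ∀ t ∈ I, 0 < μ t)
    (u : ℝ → ℂ) (hu : ContDiff ℝ 1 u) :
    ∀ t ∈ I, ∀ x : ℝ,
      HasDerivWithinAt (fun s : ℝ => gact (a s) (α s) (φ s) (μ s) u x)
        (gact (a t) (α t) (φ t) (μ t)
          (fun y => ((a' t * μ t : ℝ) : ℂ) * e1 u y + ((α' t / α t : ℝ) : ℂ) * e2 u y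
            + ((φ' t : ℝ) : ℂ) * e3 u y + ((μ' t / μ t : ℝ) : ℂ) * e4 u y) x)
        I t := by
  intro t ht x
  have hdu : ∀ y, HasDerivAt u (deriv u y) y := fun y =>
    ((hu.differentiable (by norm_num)) y).hasDerivAt
  have he4 : ∀ y, e4 u y = u y + (y : ℂ) * deriv u y := by
    intro y
    have h := ((Complex.ofRealCLM.hasDerivAt (x := y)).mul (hdu y)).deriv
    simp only [Complex.ofRealCLM_apply, Complex.ofReal_one, one_mul] at h
    exact h
  have h1 : HasDerivWithinAt (fun s => ((α s : ℝ) : ℂ)) (α' t : ℂ) I t := (hα t ht).ofReal_comp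
  have h2 : HasDerivWithinAt (fun s => ((μ s : ℝ) : ℂ)) (μ' t : ℂ) I t := (hμ t ht).ofReal_comp
  have h3 : HasDerivWithinAt (fun s => ((φ s : ℝ) : ℂ)) (φ' t : ℂ) I t := (hφ t ht).ofReal_comp
  have h4 := (h3.const_mul Complex.I).cexp
  have h5 := (hμ t ht).mul ((ha t ht).const_sub x)
  have h6 : HasDerivWithinAt (fun s => u (μ s * (x - a s)))
      ((μ' t * (x - a t) + μ t * (-a' t)) • deriv u (μ t * (x - a t))) I t :=
    (hdu (μ t * (x - a t))).scomp_hasDerivWithinAt t h5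
  have h7 := ((h4.mul h1).mul h2).mul h6
  have hα0 : (α t : ℂ) ≠ 0 := by exact_mod_cast (hαpos t ht).ne'
  have hμ0 : (μ t : ℂ) ≠ 0 := by exact_mod_cast (hμpos t ht).ne'
  refine HasDerivWithinAt.congr_deriv (f := fun s : ℝ => gact (a s) (α s) (φ s) (μ s) u x) h7 ?_
  simp only [gact, he4, e1, e2, e3, Complex.real_smul, Pi.mul_apply]
  push_cast
  field_simp
  ring
end
end

section
/- Let η(x) = 1/(x+i) and set e₁·η = −η′, e₂·η = η, e₃·η = iη, e₄·η = (xη)′. Then the values ω(e_i·η, e_j·η) = Im ∫_ℝ (e_i·η)(x) conj((e_j·η)(x)) dx are: ω(e₁·η, e₂·η) = −π/2, ω(e₁·η, e₃·η) = 0, ω(e₁·η, e₄·η) = −π/2, ω(e₂·η, e₃·η) = −π, ω(e₂·η, e₄·η) = 0, ω(e₃·η, e₄·η) = π/2. -/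
open MeasureTheory Filter

noncomputable section

/-- `η(x) = 1/(x+i)`. -/
def eta (x : ℝ) : ℂ := 1 / (x + Complex.I)

/-- The symplectic form `ω(u,v) = Im ∫ u conj(v)`. -/
def symp (u v : ℝ → ℂ) : ℝ := (∫ x : ℝ, u x * (starRingEnd ℂ) (v x)).im

lemma aux_intA : Integrable (fun x : ℝ => 1 / (1 + x ^ 2) ^ 2) := by
  refine integrable_inv_one_add_sq.mono' ?_ (Eventually.of_forall fun x => ?_)
  · exact (Measurable.aestronglyMeasurable (by fun_prop))
  · have h : 0 < 1 + x ^ 2 := by positivity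
    rw [Real.norm_eq_abs, abs_of_nonneg (by positivity), ← one_div]
    apply one_div_le_one_div_of_le h
    nlinarith [sq_nonneg x]

lemma aux_intB : Integrable (fun x : ℝ => x / (1 + x ^ 2) ^ 2) := by
  refine integrable_inv_one_add_sq.mono' ?_ (Eventually.of_forall fun x => ?_)
  · exact (Measurable.aestronglyMeasurable (by fun_prop))
  · have h : 0 < 1 + x ^ 2 := by positivity
    rw [Real.norm_eq_abs, abs_div, abs_of_pos (by positivity : 0 < (1 + x ^ 2) ^ 2), ← one_div,
      div_le_div_iff₀ (by positivity) h]
    have : |x| ≤ 1 + x ^ 2 := by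
      rw [← sq_abs x]; nlinarith [sq_nonneg (|x| - 1), abs_nonneg x]
    nlinarith

lemma aux_bound (x : ℝ) : ‖x / (1 + x ^ 2)‖ ≤ ‖x⁻¹‖ := by
  by_cases hx : x = 0
  · simp [hx]
  have hx' : 0 < |x| := abs_pos.mpr hx
  rw [Real.norm_eq_abs, Real.norm_eq_abs, abs_div, abs_of_pos (by positivity : 0 < 1 + x ^ 2),
    abs_inv, ← one_div, div_le_div_iff₀ (by positivity) hx', ← sq_abs x]
  nlinarith

lemma aux_valA : ∫ x : ℝ, 1 / (1 + x ^ 2) ^ 2 = Real.pi / 2 := by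
  have hd : ∀ x : ℝ, HasDerivAt (fun x : ℝ => (Real.arctan x + x / (1 + x ^ 2)) / 2)
      (1 / (1 + x ^ 2) ^ 2) x := by
    intro x
    have h : 1 + x ^ 2 ≠ 0 := by positivity
    have h1 := ((Real.hasDerivAt_arctan x).add
      ((hasDerivAt_id x).div (((hasDerivAt_id x).pow 2).const_add 1) h)).div_const 2
    refine HasDerivAt.congr_deriv (f := fun x : ℝ => (Real.arctan x + x / (1 + x ^ 2)) / 2) h1 ?_
    simp
    field_simp
    ring
  have ht : Tendsto (fun x : ℝ => (Real.arctan x + x / (1 + x ^ 2)) / 2) atTop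
      (nhds ((Real.pi / 2 + 0) / 2)) :=
    ((tendsto_nhds_of_tendsto_nhdsWithin Real.tendsto_arctan_atTop).add
      (squeeze_zero_norm aux_bound (by simpa only [norm_zero] using (tendsto_inv_atTop_zero (𝕜 := ℝ)).norm))).div_const 2
  have hb : Tendsto (fun x : ℝ => (Real.arctan x + x / (1 + x ^ 2)) / 2) atBot
      (nhds ((-(Real.pi / 2) + 0) / 2)) :=
    ((tendsto_nhds_of_tendsto_nhdsWithin Real.tendsto_arctan_atBot).add
      (squeeze_zero_norm aux_bound (by simpa only [norm_zero] using (tendsto_inv_atBot_zero (𝕜 := ℝ)).norm))).div_const 2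
  rw [integral_of_hasDerivAt_of_tendsto hd aux_intA hb ht]
  ring

lemma aux_valB : ∫ x : ℝ, x / (1 + x ^ 2) ^ 2 = 0 := by
  have h := integral_neg_eq_self (fun x : ℝ => x / (1 + x ^ 2) ^ 2) volume
  simp only [neg_sq, neg_div, integral_neg] at h
  linarith

lemma aux_symp (u v : ℝ → ℂ) (p q : ℝ → ℝ) (hp : Integrable p) (hq : Integrable q)
    (h : ∀ x, u x * (starRingEnd ℂ) (v x) = (p x : ℂ) + (q x : ℂ) * Complex.I) :
    symp u v = ∫ x, q x := by
  unfold symp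
  simp_rw [h]
  rw [integral_add hp.ofReal (hq.ofReal.mul_const _), integral_mul_const]
  have h1 : ∫ x, (p x : ℂ) = ((∫ x, p x : ℝ) : ℂ) := integral_ofReal
  have h2 : ∫ x, (q x : ℂ) = ((∫ x, q x : ℝ) : ℂ) := integral_ofReal
  erw [h1, h2]
  simp

lemma aux_ne (x : ℝ) : (x : ℂ) + Complex.I ≠ 0 := by
  intro h
  simpa using congrArg Complex.im h

lemma aux_ne' (x : ℝ) : (x : ℂ) - Complex.I ≠ 0 := by
  intro h
  simpa using congrArg Complex.im h

lemma aux_r (x : ℝ) : (1 : ℂ) + (x : ℂ) ^ 2 = (x + Complex.I) * (x - Complex.I) := by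
  linear_combination Complex.I_sq

lemma aux_deriv (x : ℝ) : HasDerivAt eta (-(1 / ((x : ℂ) + Complex.I) ^ 2)) x := by
  have h := ((hasDerivAt_id x).ofReal_comp.add_const Complex.I).inv (aux_ne x)
  have he : eta = fun y : ℝ => ((y : ℂ) + Complex.I)⁻¹ := by
    funext y; simp [eta]
  rw [he]
  refine HasDerivAt.congr_deriv (f := fun y : ℝ => ((y : ℂ) + Complex.I)⁻¹) h ?_
  simp [neg_div]

lemma aux_e1 (x : ℝ) : e1 eta x = 1 / ((x : ℂ) + Complex.I) ^ 2 := by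
  simp [e1, (aux_deriv x).deriv]

lemma aux_e4 (x : ℝ) : e4 eta x = Complex.I / ((x : ℂ) + Complex.I) ^ 2 := by
  have h := (hasDerivAt_id x).ofReal_comp.mul (aux_deriv x)
  have h2 : e4 eta x = _ := h.deriv
  rw [h2]
  have := aux_ne x
  simp only [eta, id]
  field_simp
  push_cast
  ring

/-- the values of the symplectic form on the tangent vectors
`e_j·η` at `η`. -/
theorem statement6 :
    symp (e1 eta) (e2 eta) = -(Real.pi / 2) ∧
    symp (e1 eta) (e3 eta) = 0 ∧
    symp (e1 eta) (e4 eta) = -(Real.pi / 2) ∧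
    symp (e2 eta) (e3 eta) = -Real.pi ∧
    symp (e2 eta) (e4 eta) = 0 ∧
    symp (e3 eta) (e4 eta) = Real.pi / 2 := by
  have hI := Complex.I_sq
  refine ⟨?_, ?_, ?_, ?_, ?_, ?_⟩
  · rw [aux_symp _ _ _ _ aux_intB aux_intA.neg]
    · simp only [Pi.neg_apply, integral_neg, aux_valA]
    · intro x
      have h1 := aux_ne x
      have h2 := aux_ne' x
      rw [aux_e1]
      simp only [e2, eta, Pi.neg_apply, Pi.zero_apply, map_div₀, map_one, map_add, Complex.conj_I,
        Complex.conj_ofReal, ← sub_eq_add_neg]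
      push_cast
      rw [aux_r]
      field_simp
      ring
  · rw [aux_symp _ _ _ _ aux_intA.neg aux_intB.neg]
    · simp only [Pi.neg_apply, integral_neg, aux_valB, neg_zero]
    · intro x
      have h1 := aux_ne x
      have h2 := aux_ne' x
      rw [aux_e1]
      simp only [e3, eta, Pi.neg_apply, Pi.zero_apply, map_div₀, map_mul, map_one, map_add, Complex.conj_I,
        Complex.conj_ofReal, ← sub_eq_add_neg]
      push_cast
      rw [aux_r]
      field_simp
      linear_combination hI
  · rw [aux_symp _ _ _ _ (integrable_zero _ _ _) aux_intA.neg]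
    · simp only [Pi.neg_apply, integral_neg, aux_valA]
    · intro x
      have h1 := aux_ne x
      have h2 := aux_ne' x
      rw [aux_e1, aux_e4]
      simp only [Pi.neg_apply, Pi.zero_apply, map_div₀, map_pow, map_one, map_add, Complex.conj_I,
        Complex.conj_ofReal, ← sub_eq_add_neg]
      push_cast
      rw [aux_r]
      field_simp
      ring
  · rw [aux_symp _ _ _ _ (integrable_zero _ _ _) integrable_inv_one_add_sq.neg]
    · simp only [Pi.neg_apply, integral_neg, integral_univ_inv_one_add_sq]
    · intro x
      have h1 := aux_ne x
      have h2 := aux_ne' x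
      simp only [e2, e3, eta, Pi.neg_apply, Pi.zero_apply, map_div₀, map_mul, map_one, map_add, Complex.conj_I,
        Complex.conj_ofReal, ← sub_eq_add_neg]
      push_cast
      rw [aux_r]
      field_simp
      ring
  · rw [aux_symp _ _ _ _ aux_intA aux_intB.neg]
    · simp only [Pi.neg_apply, integral_neg, aux_valB, neg_zero]
    · intro x
      have h1 := aux_ne x
      have h2 := aux_ne' x
      rw [aux_e4]
      simp only [e2, eta, Pi.neg_apply, Pi.zero_apply, map_div₀, map_pow, map_one, map_add, Complex.conj_I,
        Complex.conj_ofReal, ← sub_eq_add_neg]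
      push_cast
      rw [aux_r]
      field_simp
      linear_combination -hI
  · rw [aux_symp _ _ _ _ aux_intB aux_intA]
    · exact aux_valA
    · intro x
      have h1 := aux_ne x
      have h2 := aux_ne' x
      rw [aux_e4]
      simp only [e3, eta, map_div₀, map_pow, map_one, map_add, Complex.conj_I,
        Complex.conj_ofReal, ← sub_eq_add_neg]
      push_cast
      rw [aux_r]
      field_simp
      linear_combination -hI
end
end

section
/- Let g = (a,α,φ,μ) ∈ ℝ×(0,∞)×ℝ×(0,∞) and let s(a,α,φ,μ)(x) = e^{iφ} α μ η(μ(x−a)). For X = (X₁,X₂,X₃,X₄) ∈ ℝ⁴ let V(X)(x) = X₁ ∂_a s(x) + X₂ ∂_α s(x) + X₃ ∂_φ s(x) + X₄ ∂_μ s(x), the partial derivatives being evaluated at (a,α,φ,μ). Then for all X, Y ∈ ℝ⁴: Im ∫_ℝ V(X)(x) conj(V(Y)(x)) dx = (π/2) α²μ [ (μ/α)(X₂Y₁ − X₁Y₂) + (X₄Y₁ − X₁Y₄) + (2/α)(X₃Y₂ − X₂Y₃) + (1/μ)(X₃Y₄ − X₄Y₃) ]. -/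
open MeasureTheory Filter

noncomputable section

/-- The soliton `s(a,α,φ,μ)(x) = e^{iφ} α μ η(μ(x-a))`. -/
def sol (a α φ μ : ℝ) (x : ℝ) : ℂ :=
  Complex.exp (Complex.I * φ) * α * μ * eta (μ * (x - a))

/-- `V(X) = X₁ ∂_a s + X₂ ∂_α s + X₃ ∂_φ s + X₄ ∂_μ s` at the point `(a,α,φ,μ)`. -/
def Vfield (a α φ μ : ℝ) (X : Fin 4 → ℝ) (x : ℝ) : ℂ :=
  (X 0 : ℂ) * deriv (fun a' : ℝ => sol a' α φ μ x) a
  + (X 1 : ℂ) * deriv (fun α' : ℝ => sol a α' φ μ x) α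
  + (X 2 : ℂ) * deriv (fun φ' : ℝ => sol a α φ' μ x) φ
  + (X 3 : ℂ) * deriv (fun μ' : ℝ => sol a α φ μ' x) μ


lemma int_J2 : Integrable (fun y : ℝ => ((1 + y ^ 2)⁻¹) ^ 2) := by
  refine integrable_inv_one_add_sq.mono' (by fun_prop) (Eventually.of_forall fun y => ?_)
  have h0 : 0 ≤ (1 + y ^ 2)⁻¹ := by positivity
  have h1 : (1 + y ^ 2)⁻¹ ≤ 1 := inv_le_one_of_one_le₀ (by nlinarith [sq_nonneg y])
  rw [Real.norm_of_nonneg (by positivity)]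
  nlinarith

lemma int_J3 : Integrable (fun y : ℝ => y * ((1 + y ^ 2)⁻¹) ^ 2) := by
  refine integrable_inv_one_add_sq.mono' (by fun_prop) (Eventually.of_forall fun y => ?_)
  have h0 : 0 < 1 + y ^ 2 := by positivity
  rw [Real.norm_eq_abs, abs_mul, abs_of_nonneg (a := ((1 + y ^ 2)⁻¹) ^ 2) (by positivity), sq,
    ← mul_assoc]
  have h2 : |y| * (1 + y ^ 2)⁻¹ ≤ 1 := by
    rw [← div_eq_mul_inv, div_le_one h0]
    nlinarith [sq_nonneg (|y| - 1), sq_abs y]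
  exact mul_le_of_le_one_left (by positivity) h2

lemma val_J3 : ∫ y : ℝ, y * ((1 + y ^ 2)⁻¹) ^ 2 = 0 := by
  have h := integral_neg_eq_self (fun y : ℝ => y * ((1 + y ^ 2)⁻¹) ^ 2) volume
  simp only [neg_sq, neg_mul, integral_neg] at h
  linarith

lemma val_J2 : ∫ y : ℝ, ((1 + y ^ 2)⁻¹) ^ 2 = Real.pi / 2 := by
  have hd : ∀ y : ℝ, HasDerivAt (fun y : ℝ => (Real.arctan y + y * (1 + y ^ 2)⁻¹) / 2)
      (((1 + y ^ 2)⁻¹) ^ 2) y := by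
    intro y
    have h0 : (1 + y ^ 2) ≠ 0 := by positivity
    have h1 : HasDerivAt (fun y : ℝ => 1 + y ^ 2) (2 * y) y := by
      simpa using (hasDerivAt_pow 2 y).const_add 1
    have := ((Real.hasDerivAt_arctan y).add ((hasDerivAt_id y).mul (h1.inv h0))).div_const 2
    refine this.congr_deriv ?_
    simp only [id, Pi.inv_apply]
    field_simp
    ring
  have hb : ∀ y : ℝ, |y * (1 + y ^ 2)⁻¹| ≤ |y⁻¹| := by
    intro y
    rcases eq_or_ne y 0 with rfl | hy
    · simp
    have h0 : 0 < 1 + y ^ 2 := by positivity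
    have hy' : 0 < |y| := abs_pos.mpr hy
    rw [abs_mul, abs_inv, abs_inv, abs_of_pos h0, ← div_eq_mul_inv, div_le_iff₀ h0,
      inv_mul_eq_div, le_div_iff₀ hy']
    nlinarith [abs_mul_abs_self y]
  have ht : Tendsto (fun y : ℝ => y * (1 + y ^ 2)⁻¹) atTop (nhds 0) :=
    squeeze_zero_norm (a := fun y : ℝ => |y⁻¹|) hb (by simpa using (tendsto_inv_atTop_zero (𝕜 := ℝ)).abs)
  have hbt : Tendsto (fun y : ℝ => y * (1 + y ^ 2)⁻¹) atBot (nhds 0) :=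
    squeeze_zero_norm (a := fun y : ℝ => |y⁻¹|) hb (by simpa using (tendsto_inv_atBot_zero (𝕜 := ℝ)).abs)
  have h1 := ((Real.tendsto_arctan_atTop.mono_right nhdsWithin_le_nhds).add ht).div_const 2
  have h2 := ((Real.tendsto_arctan_atBot.mono_right nhdsWithin_le_nhds).add hbt).div_const 2
  rw [integral_of_hasDerivAt_of_tendsto hd int_J2 h2 h1]
  ring

lemma val_G (P Q R : ℂ) :
    ∫ y : ℝ, (P * (((1 + y ^ 2)⁻¹ : ℝ) : ℂ) + Q * ((((1 + y ^ 2)⁻¹) ^ 2 : ℝ) : ℂ)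
      + R * ((y * ((1 + y ^ 2)⁻¹) ^ 2 : ℝ) : ℂ)) = P * Real.pi + Q * ((Real.pi / 2 : ℝ) : ℂ) := by
  have i1 : Integrable (fun y : ℝ => P * (((1 + y ^ 2)⁻¹ : ℝ) : ℂ)) := (integrable_inv_one_add_sq.ofReal (𝕜 := ℂ)).const_mul P
  have i2 : Integrable (fun y : ℝ => Q * ((((1 + y ^ 2)⁻¹) ^ 2 : ℝ) : ℂ)) := (int_J2.ofReal (𝕜 := ℂ)).const_mul Q
  have i3 : Integrable (fun y : ℝ => R * ((y * ((1 + y ^ 2)⁻¹) ^ 2 : ℝ) : ℂ)) := (int_J3.ofReal (𝕜 := ℂ)).const_mul R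
  have i12 : Integrable (fun y : ℝ => P * (((1 + y ^ 2)⁻¹ : ℝ) : ℂ)
      + Q * ((((1 + y ^ 2)⁻¹) ^ 2 : ℝ) : ℂ)) := i1.add i2
  rw [integral_add i12 i3, integral_add i1 i2, integral_const_mul, integral_const_mul,
    integral_const_mul]
  have e1 : ∫ y : ℝ, (((1 + y ^ 2)⁻¹ : ℝ) : ℂ) = (Real.pi : ℂ) := by
    rw [integral_complex_ofReal, integral_univ_inv_one_add_sq]
  have e2 : ∫ y : ℝ, ((((1 + y ^ 2)⁻¹) ^ 2 : ℝ) : ℂ) = ((Real.pi / 2 : ℝ) : ℂ) := by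
    rw [integral_complex_ofReal, val_J2]
  have e3 : ∫ y : ℝ, ((y * ((1 + y ^ 2)⁻¹) ^ 2 : ℝ) : ℂ) = ((0 : ℝ) : ℂ) := by
    rw [integral_complex_ofReal, val_J3]
  rw [e1, e2, e3]
  simp

lemma add_I_ne (y : ℝ) : (y : ℂ) + Complex.I ≠ 0 := by
  intro h
  simpa using congrArg Complex.im h

lemma sub_I_ne (y : ℝ) : (y : ℂ) - Complex.I ≠ 0 := by
  intro h
  simpa using congrArg Complex.im h

lemma hasDerivAt_eta (y : ℝ) : HasDerivAt eta (-1 / ((y : ℂ) + Complex.I) ^ 2) y := by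
  have h : HasDerivAt (fun y : ℝ => (y : ℂ) + Complex.I) 1 y :=
    (Complex.ofRealCLM.hasDerivAt (x := y)).add_const _
  have h2 := h.inv (add_I_ne y)
  have : eta = (fun y : ℝ => (y : ℂ) + Complex.I)⁻¹ := by
    ext y; simp [eta]
  rw [this]
  exact h2

lemma Vfield_eq (a α φ μ : ℝ) (X : Fin 4 → ℝ) (x : ℝ) :
    Vfield a α φ μ X x = Complex.exp (Complex.I * φ) *
      ((μ * (X 1 + Complex.I * α * X 2)) / (((μ * (x - a) : ℝ) : ℂ) + Complex.I)
       + (α * (μ ^ 2 * X 0 + Complex.I * X 3)) / (((μ * (x - a) : ℝ) : ℂ) + Complex.I) ^ 2) := by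
  have hy := add_I_ne (μ * (x - a))
  have of (t : ℝ) : HasDerivAt (fun t : ℝ => (t : ℂ)) 1 t := Complex.ofRealCLM.hasDerivAt (x := t)
  have d0 : HasDerivAt (fun a' : ℝ => sol a' α φ μ x)
      (Complex.exp (Complex.I * φ) * α * μ *
        ((μ * (-1)) • (-1 / (((μ * (x - a) : ℝ) : ℂ) + Complex.I) ^ 2))) a := by
    have h1 : HasDerivAt (fun a' : ℝ => μ * (x - a')) (μ * (-1)) a :=
      ((hasDerivAt_id a).const_sub x).const_mul μ
    exact ((hasDerivAt_eta (μ * (x - a))).scomp a h1).const_mul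
      (Complex.exp (Complex.I * φ) * α * μ)
  have d1 : HasDerivAt (fun α' : ℝ => sol a α' φ μ x) _ α :=
    (((of α).const_mul (Complex.exp (Complex.I * φ))).mul_const (μ : ℂ)).mul_const
      (eta (μ * (x - a)))
  have d2 : HasDerivAt (fun φ' : ℝ => sol a α φ' μ x) _ φ :=
    (((((of φ).const_mul Complex.I).cexp).mul_const (α : ℂ)).mul_const (μ : ℂ)).mul_const
      (eta (μ * (x - a)))
  have d3 : HasDerivAt (fun μ' : ℝ => sol a α φ μ' x)
      (Complex.exp (Complex.I * φ) * α * 1 * eta (μ * (x - a)) +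
        Complex.exp (Complex.I * φ) * α * μ *
        ((1 * (x - a)) • (-1 / (((μ * (x - a) : ℝ) : ℂ) + Complex.I) ^ 2))) μ := by
    have h1 : HasDerivAt (fun μ' : ℝ => μ' * (x - a)) (1 * (x - a)) μ :=
      (hasDerivAt_id μ).mul_const (x - a)
    have h2 : HasDerivAt (fun μ' : ℝ => eta (μ' * (x - a))) _ μ :=
      HasDerivAt.scomp (g₁ := eta) (h := fun μ' : ℝ => μ' * (x - a)) μ
        (hasDerivAt_eta (μ * (x - a))) h1
    exact ((of μ).const_mul (Complex.exp (Complex.I * φ) * α)).mul h2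
  rw [Vfield, d0.deriv, d1.deriv, d2.deriv, d3.deriv]
  simp only [eta, Complex.real_smul, Function.comp]
  push_cast at hy ⊢
  field_simp
  ring

lemma exp_mul_conj (φ : ℝ) : Complex.exp (Complex.I * φ) *
    (starRingEnd ℂ) (Complex.exp (Complex.I * φ)) = 1 := by
  rw [← Complex.exp_conj, ← Complex.exp_add]
  simp

lemma vprod_eq (A B A' B' : ℂ) (φ y : ℝ) :
    (Complex.exp (Complex.I * φ) * (A / ((y : ℂ) + Complex.I) + B / ((y : ℂ) + Complex.I) ^ 2)) *
    (starRingEnd ℂ) (Complex.exp (Complex.I * φ) *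
      (A' / ((y : ℂ) + Complex.I) + B' / ((y : ℂ) + Complex.I) ^ 2)) =
    (A * (starRingEnd ℂ) A') * (((1 + y ^ 2)⁻¹ : ℝ) : ℂ)
    + (B * (starRingEnd ℂ) B' + Complex.I * (A * (starRingEnd ℂ) B' - B * (starRingEnd ℂ) A'))
        * ((((1 + y ^ 2)⁻¹) ^ 2 : ℝ) : ℂ)
    + (A * (starRingEnd ℂ) B' + B * (starRingEnd ℂ) A')
        * ((y * ((1 + y ^ 2)⁻¹) ^ 2 : ℝ) : ℂ) := by
  rw [map_mul, mul_mul_mul_comm, exp_mul_conj, one_mul]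
  simp only [map_add, map_div₀, map_pow, Complex.conj_ofReal, Complex.conj_I]
  have h1 := add_I_ne y
  have h2 := sub_I_ne y
  have h3 : (((1 + y ^ 2)⁻¹ : ℝ) : ℂ) = (((y : ℂ) + Complex.I) * ((y : ℂ) - Complex.I))⁻¹ := by
    push_cast
    congr 1
    linear_combination Complex.I_sq
  rw [Complex.ofReal_mul, Complex.ofReal_pow, h3, ← sub_eq_add_neg]
  generalize (starRingEnd ℂ) A' = C
  generalize (starRingEnd ℂ) B' = D
  field_simp
  ring_nf
  try simp only [Complex.I_sq]
  try ring_nf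

lemma integral_comp_affine_aux (μ a : ℝ) (hμ : 0 < μ) (G : ℝ → ℂ) :
    ∫ x : ℝ, G (μ * (x - a)) = (μ⁻¹ : ℝ) • ∫ y : ℝ, G y := by
  rw [integral_sub_right_eq_self (fun x => G (μ * x)) a, Measure.integral_comp_mul_left,
    abs_of_pos (inv_pos.mpr hμ)]

lemma val_G_affine (μ a : ℝ) (hμ : 0 < μ) (P Q R : ℂ) :
    ∫ x : ℝ, (P * (((1 + (μ * (x - a)) ^ 2)⁻¹ : ℝ) : ℂ)
      + Q * ((((1 + (μ * (x - a)) ^ 2)⁻¹) ^ 2 : ℝ) : ℂ)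
      + R * ((μ * (x - a) * ((1 + (μ * (x - a)) ^ 2)⁻¹) ^ 2 : ℝ) : ℂ))
    = (μ⁻¹ : ℝ) • (P * Real.pi + Q * ((Real.pi / 2 : ℝ) : ℂ)) := by
  rw [← val_G P Q R]
  exact integral_comp_affine_aux μ a hμ (fun y : ℝ => P * (((1 + y ^ 2)⁻¹ : ℝ) : ℂ)
    + Q * ((((1 + y ^ 2)⁻¹) ^ 2 : ℝ) : ℂ) + R * ((y * ((1 + y ^ 2)⁻¹) ^ 2 : ℝ) : ℂ))

/-- the restriction of the symplectic form to the manifold of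
solitons, in the coordinates `(a, α, φ, μ)`. -/
theorem statement7
    (a α φ μ : ℝ) (hα : 0 < α) (hμ : 0 < μ) (X Y : Fin 4 → ℝ) :
    (∫ x : ℝ, Vfield a α φ μ X x * (starRingEnd ℂ) (Vfield a α φ μ Y x)).im
      = Real.pi / 2 * α ^ 2 * μ *
        ((μ / α) * (X 1 * Y 0 - X 0 * Y 1) + (X 3 * Y 0 - X 0 * Y 3)
          + (2 / α) * (X 2 * Y 1 - X 1 * Y 2) + (1 / μ) * (X 2 * Y 3 - X 3 * Y 2)) := by
  simp only [Vfield_eq, vprod_eq]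
  rw [val_G_affine μ a hμ]
  rw [Complex.real_smul, Complex.im_ofReal_mul]
  simp [← Complex.ofReal_pow]
  field_simp
  ring
end
end

section
/- Fix α, μ > 0 and define the alternating bilinear form Ω on ℝ⁴ by Ω(V, X) = (π/2) α²μ [ (μ/α)(V₂X₁ − V₁X₂) + (V₄X₁ − V₁X₄) + (2/α)(V₃X₂ − V₂X₃) + (1/μ)(V₃X₄ − V₄X₃) ]. Then for any f_a, f_α, f_φ, f_μ ∈ ℝ, the vector X ∈ ℝ⁴ with components X₁ = −(2/(α²μ²π))(−2μ f_μ + α f_α), X₂ = (2/(α²μ²π))(α f_a + αμ f_φ), X₃ = (2/(α²μπ))(μ f_μ − α f_α), X₄ = −(2/(α²μπ))(μ f_φ + 2 f_a) is the unique vector satisfying Ω(V, X) = f_a V₁ + f_α V₂ + f_φ V₃ + f_μ V₄ for all V ∈ ℝ⁴; in particular Ω is non-degenerate. -/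
open Real

noncomputable section

/-- The restriction of the symplectic form to the manifold of solitons, in the
coordinates `(a, α, φ, μ)`, as an alternating bilinear form on `ℝ⁴`. -/
def Omeg (α μ : ℝ) (V X : Fin 4 → ℝ) : ℝ :=
  Real.pi / 2 * α ^ 2 * μ *
    ((μ / α) * (V 1 * X 0 - V 0 * X 1) + (V 3 * X 0 - V 0 * X 3)
      + (2 / α) * (V 2 * X 1 - V 1 * X 2) + (1 / μ) * (V 2 * X 3 - V 3 * X 2))

/-- The Hamiltonian vector field of a function with partial derivatives
`(f_a, f_α, f_φ, f_μ)` with respect to `Omeg`. -/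
def hamVF (α μ fa fα fφ fμ : ℝ) : Fin 4 → ℝ :=
  ![ -(2 / (α ^ 2 * μ ^ 2 * Real.pi)) * (-(2 * μ * fμ) + α * fα),
     (2 / (α ^ 2 * μ ^ 2 * Real.pi)) * (α * fa + α * μ * fφ),
     (2 / (α ^ 2 * μ * Real.pi)) * (μ * fμ - α * fα),
     -(2 / (α ^ 2 * μ * Real.pi)) * (μ * fφ + 2 * fa) ]

theorem Omeg_nondeg (α μ : ℝ) (hα : 0 < α) (hμ : 0 < μ) (X : Fin 4 → ℝ)
    (h : ∀ V : Fin 4 → ℝ, Omeg α μ V X = 0) : X = 0 := by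
  have hα' := hα.ne'
  have hμ' := hμ.ne'
  have hK : Real.pi / 2 * α ^ 2 * μ ≠ 0 := by positivity
  have key : ∀ V : Fin 4 → ℝ, (μ / α) * (V 1 * X 0 - V 0 * X 1) + (V 3 * X 0 - V 0 * X 3)
      + (2 / α) * (V 2 * X 1 - V 1 * X 2) + (1 / μ) * (V 2 * X 3 - V 3 * X 2) = 0 := fun V =>
    (mul_eq_zero.mp (h V)).resolve_left hK
  have h0 := key ![1, 0, 0, 0]
  have h1 := key ![0, 1, 0, 0]
  have h2 := key ![0, 0, 1, 0]
  have h3 := key ![0, 0, 0, 1]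
  simp at h0 h1 h2 h3
  field_simp at h0 h1 h2 h3
  have e2 : X 2 = 0 := by linarith
  have e0 : X 0 = 0 := by
    have : μ * X 0 = 0 := by linarith
    exact (mul_eq_zero.mp this).resolve_left hμ'
  have e3 : X 3 = 0 := by
    have : α * X 3 = 0 := by linarith
    exact (mul_eq_zero.mp this).resolve_left hα'
  have e1 : X 1 = 0 := by
    have : μ * X 1 = 0 := by rw [e3] at h0; linarith
    exact (mul_eq_zero.mp this).resolve_left hμ'
  ext i
  fin_cases i <;> simp [e0, e1, e2, e3]

/-- `hamVF` is the unique vector `X` with `Ω(V,X) = df(V)` for all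
`V`; in particular `Ω` is non-degenerate. -/
theorem statement8 (α μ : ℝ) (hα : 0 < α) (hμ : 0 < μ) (fa fα fφ fμ : ℝ) :
    (∀ V : Fin 4 → ℝ, Omeg α μ V (hamVF α μ fa fα fφ fμ)
        = fa * V 0 + fα * V 1 + fφ * V 2 + fμ * V 3) ∧
    (∀ X : Fin 4 → ℝ,
        (∀ V : Fin 4 → ℝ, Omeg α μ V X = fa * V 0 + fα * V 1 + fφ * V 2 + fμ * V 3) →
        X = hamVF α μ fa fα fφ fμ) ∧
    (∀ X : Fin 4 → ℝ, (∀ V : Fin 4 → ℝ, Omeg α μ V X = 0) → X = 0) := by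
  have first : ∀ V : Fin 4 → ℝ, Omeg α μ V (hamVF α μ fa fα fφ fμ)
        = fa * V 0 + fα * V 1 + fφ * V 2 + fμ * V 3 := by
    intro V
    have hπ := Real.pi_pos.ne'
    have hα' := hα.ne'
    have hμ' := hμ.ne'
    simp only [Omeg, hamVF, Matrix.cons_val]
    field_simp
    ring
  refine ⟨first, fun X hX => ?_, fun X hX => Omeg_nondeg α μ hα hμ X hX⟩
  apply sub_eq_zero.mp
  apply Omeg_nondeg α μ hα hμ
  intro V
  have e : Omeg α μ V (X - hamVF α μ fa fα fφ fμ)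
      = Omeg α μ V X - Omeg α μ V (hamVF α μ fa fα fφ fμ) := by
    simp only [Omeg, Pi.sub_apply]
    ring
  rw [e, hX, first, sub_self]
end
end

section
/- Let η(x) = 1/(x+i) and define h(x) = η(x)/4 − (i/2)η′(x) = 1/(4(x+i)) + i/(2(x+i)²). Then the Fourier transform of h is supported in [0,∞), and the Fourier transform of |η|²η − h, i.e. of x ↦ 1/((x+i)²(x−i)) − h(x) = −1/(4(x−i)), is supported in (−∞,0]. Consequently Π(|η|²η) = h, i.e. (i/2)η′ + Π(|η|²η) − η/4 = 0, so η is a critical point of the functional E(u) = (1/4)∫|u|⁴ dx + (i/4)∫ u′ conj(u) dx − (1/8)∫|u|² dx. -/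
open MeasureTheory Filter

noncomputable section

/-- Truncated Fourier integral `∫_{-R}^{R} e^{-ixξ} f(x) dx`. -/
def truncFT (f : ℝ → ℂ) (ξ R : ℝ) : ℂ :=
  ∫ x in (-R)..R, Complex.exp (-(Complex.I * x * ξ)) * f x

/-- The Fourier transform `f̂(ξ) = ∫ e^{-ixξ} f(x) dx`, taken as the improper
(symmetric principal value) limit of truncated integrals. -/
def FT (f : ℝ → ℂ) (ξ : ℝ) : ℂ := limUnder atTop (truncFT f ξ)

/-- `SzegoProjEq f g` says that `g = Π f` where `Π` is the Szegő projector: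
the Fourier transform of `g` is `1_{[0,∞)}` times that of `f`. -/
def SzegoProjEq (f g : ℝ → ℂ) : Prop :=
  ∀ᵐ ξ : ℝ ∂MeasureTheory.volume, FT g ξ = if 0 ≤ ξ then FT f ξ else 0

/-- `h = η/4 - (i/2)η'`. -/
def hfun (x : ℝ) : ℂ := eta x / 4 - Complex.I / 2 * deriv eta x

lemma jordan_aux (a : ℝ) (ha : 0 < a) (g : ℂ → ℂ)
    (hd : ∀ z : ℂ, 0 ≤ z.im → DifferentiableAt ℂ g z) (C : ℝ)
    (hC : ∀ z : ℂ, 0 ≤ z.im → ‖z‖ * ‖g z‖ ≤ C) :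
    Tendsto (fun R : ℝ => ∫ x in (-R)..R, Complex.exp (Complex.I * a * x) * g x)
      atTop (nhds 0) := by
  have hC0 : 0 ≤ C := le_trans (by positivity) (hC 0 (by simp))
  have hb : ∀ (R : ℝ) (z : ℂ), 0 < R → 0 ≤ z.im → R ≤ ‖z‖ → ∀ w : ℂ, w = Complex.I * a * z →
      ‖Complex.exp w * g z‖ ≤ Real.exp (-(a * z.im)) * (C / R) := by
    intro R z hR hz hRz w hw
    rw [norm_mul, Complex.norm_exp, hw]
    have h1 : (Complex.I * a * z).re = -(a * z.im) := by simp
    rw [h1]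
    gcongr
    rw [le_div_iff₀ hR]
    nlinarith [hC z hz, norm_nonneg (g z)]
  have hint : ∀ R : ℝ, ∫ y in (0:ℝ)..R, Real.exp (-(a * y)) * (C / R)
      = ((1 - Real.exp (-(a * R))) / a) * (C / R) := by
    intro R
    rw [intervalIntegral.integral_mul_const]
    congr 1
    have : ∀ y ∈ Set.uIcc 0 R, HasDerivAt (fun y => -Real.exp (-(a * y)) / a)
        (Real.exp (-(a * y))) y := by
      intro y _
      have h := (((hasDerivAt_id y).const_mul a).neg.exp.neg).div_const a
      have e : -(Real.exp (-(a * y)) * -(a * 1)) / a = Real.exp (-(a * y)) := by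
        field_simp
      rw [← e]
      exact h
    rw [intervalIntegral.integral_eq_sub_of_hasDerivAt this
      (Continuous.intervalIntegrable (by fun_prop) _ _)]
    simp; ring
  have key : ∀ R : ℝ, 0 < R → ‖∫ x in (-R)..R, Complex.exp (Complex.I * a * x) * g x‖
      ≤ 2 * C * Real.exp (-(a * R)) + 2 * (C / a / R) := by
    intro R hR
    have H := Complex.integral_boundary_rect_eq_zero_of_differentiableOn
      (fun z => Complex.exp (Complex.I * a * z) * g z) (-R : ℝ) (R + R * Complex.I) (by
        intro z hz
        have hz' : 0 ≤ z.im := by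
          have := hz.2
          simp [Set.uIcc_of_le hR.le] at this
          exact this.1
        exact (DifferentiableAt.mul (by fun_prop) (hd z hz')).differentiableWithinAt)
    simp only [Complex.ofReal_re, Complex.ofReal_im, Complex.add_re, Complex.add_im, Complex.mul_re,
      Complex.mul_im, Complex.I_re, Complex.I_im, mul_zero, mul_one, zero_mul, sub_zero, add_zero,
      zero_add, Complex.ofReal_zero] at H
    set A := ∫ x in (-R)..R, Complex.exp (Complex.I * a * x) * g x
    have hT : ‖∫ x in (-R)..R, Complex.exp (Complex.I * a * (x + R * Complex.I))
        * g (x + R * Complex.I)‖ ≤ (Real.exp (-(a * R)) * (C / R)) * |R - (-R)| := by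
      apply intervalIntegral.norm_integral_le_of_norm_le_const
      intro x _
      have := hb R (x + R * Complex.I) hR (by simp [hR.le])
        (by have := Complex.abs_im_le_norm (x + R * Complex.I); simpa [abs_of_pos hR] using this) _ rfl
      simpa using this
    have hS : ∀ s : ℝ, |s| = R → ‖∫ y in (0:ℝ)..R, Complex.exp (Complex.I * a * (s + y * Complex.I))
        * g (s + y * Complex.I)‖ ≤ C / a / R := by
      intro s hs
      calc _ ≤ ∫ y in (0:ℝ)..R, Real.exp (-(a * y)) * (C / R) := by
            apply intervalIntegral.norm_integral_le_of_norm_le hR.le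
            · refine Filter.Eventually.of_forall fun y hy => ?_
              have := hb R (s + y * Complex.I) hR (by simp [hy.1.le])
                (by have := Complex.abs_re_le_norm (s + y * Complex.I); simpa [hs] using this) _ rfl
              simpa using this
            · exact Continuous.intervalIntegrable (by fun_prop) _ _
        _ ≤ C / a / R := by
            rw [hint]
            have : (1 - Real.exp (-(a * R))) / a ≤ 1 / a := by
              gcongr; linarith [Real.exp_pos (-(a * R))]
            calc _ ≤ 1 / a * (C / R) := by gcongr
              _ = _ := by field_simp
    have h1 := hS R (abs_of_pos hR)
    have h2 := hS (-R) (by simp [abs_of_pos hR])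
    have hT' : (Real.exp (-(a * R)) * (C / R)) * |R - (-R)| = 2 * C * Real.exp (-(a * R)) := by
      rw [abs_of_pos (by linarith)]; field_simp; ring
    rw [hT'] at hT
    set T := ∫ x in (-R)..R, Complex.exp (Complex.I * a * (x + R * Complex.I))
        * g (x + R * Complex.I)
    set S1 := ∫ y in (0:ℝ)..R, Complex.exp (Complex.I * a * (R + y * Complex.I))
        * g (R + y * Complex.I)
    set S2 := ∫ y in (0:ℝ)..R, Complex.exp (Complex.I * a * ((-R : ℝ) + y * Complex.I))
        * g ((-R : ℝ) + y * Complex.I)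
    have hA : A = T - Complex.I * S1 + Complex.I * S2 := by
      simp only [smul_eq_mul] at H
      linear_combination H
    rw [hA]
    calc _ ≤ ‖T‖ + ‖Complex.I * S1‖ + ‖Complex.I * S2‖ :=
          (norm_add_le _ _).trans (by gcongr; exact norm_sub_le _ _)
      _ ≤ _ := by simp only [norm_mul, Complex.norm_I, one_mul]; linarith
  apply squeeze_zero_norm' ((eventually_gt_atTop 0).mono key)
  have e1 : Tendsto (fun R : ℝ => Real.exp (-(a * R))) atTop (nhds 0) :=
    Real.tendsto_exp_neg_atTop_nhds_zero.comp (tendsto_id.const_mul_atTop ha)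
  have e2 : Tendsto (fun R : ℝ => C / a / R) atTop (nhds 0) := tendsto_id.const_div_atTop _
  simpa using (e1.const_mul (2 * C)).add (e2.const_mul 2)

lemma shiftI_bound (z : ℂ) (hz : 0 ≤ z.im) : ‖z‖ ≤ ‖z + Complex.I‖ ∧ 1 ≤ ‖z + Complex.I‖ := by
  constructor
  · rw [← sq_le_sq₀ (norm_nonneg _) (norm_nonneg _), Complex.sq_norm, Complex.sq_norm,
      Complex.normSq_apply, Complex.normSq_apply]
    simp; nlinarith
  · have := (le_abs_self _).trans (Complex.abs_im_le_norm (z + Complex.I))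
    simp at this; linarith

lemma shiftI_ne (z : ℂ) (hz : 0 ≤ z.im) : z + Complex.I ≠ 0 := by
  have := (shiftI_bound z hz).2
  intro h; rw [h] at this; simp at this; linarith

lemma hfun_formula (x : ℝ) : hfun x = 1 / (4 * ((x : ℂ) + Complex.I))
        + Complex.I / (2 * ((x : ℂ) + Complex.I) ^ 2) := by
  have hne := shiftI_ne x (by simp)
  have hd : HasDerivAt eta (-1 / ((x : ℂ) + Complex.I) ^ 2) x := by
    have h1 : HasDerivAt (fun y : ℝ => (y : ℂ) + Complex.I) 1 x :=
      (Complex.ofRealCLM.hasDerivAt (x := x)).add_const _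
    have h2 := h1.inv hne
    have : eta = fun y : ℝ => ((y : ℂ) + Complex.I)⁻¹ := by
      funext y; simp [eta]
    rw [this]; exact h2
  rw [hfun, hd.deriv, eta]
  field_simp
  ring

lemma diff_formula (x : ℝ) :
    (‖eta x‖ : ℂ) ^ 2 * eta x - hfun x = -(1 / (4 * ((x : ℂ) - Complex.I))) := by
  have hne := shiftI_ne x (by simp)
  have hne' : (x : ℂ) - Complex.I ≠ 0 := by
    intro h
    have := congrArg Complex.im h
    simp at this
  have hn : (‖eta x‖ : ℂ) ^ 2 = 1 / (((x : ℂ) + Complex.I) * (x - Complex.I)) := by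
    rw [← Complex.conj_mul', eta]
    simp only [map_div₀, map_one, map_add, Complex.conj_ofReal, Complex.conj_I]
    rw [← sub_eq_add_neg]
    field_simp
  rw [hn, hfun_formula, eta]
  field_simp
  ring_nf
  simp
  ring

lemma eta_cont : Continuous eta := by
  unfold eta
  exact continuous_const.div (by fun_prop) (fun x => shiftI_ne x (by simp))

lemma hfun_cont : Continuous hfun := by
  have : hfun = _ := funext hfun_formula
  rw [this]
  have h := fun x : ℝ => shiftI_ne x (by simp)
  refine (continuous_const.div (by fun_prop) fun x => ?_).add
    (continuous_const.div (by fun_prop) fun x => ?_)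
  · exact mul_ne_zero (by norm_num) (h x)
  · exact mul_ne_zero (by norm_num) (pow_ne_zero _ (h x))

lemma trunc_h (ξ : ℝ) (hξ : ξ < 0) : Tendsto (truncFT hfun ξ) atTop (nhds 0) := by
  have := jordan_aux (-ξ) (by linarith)
    (fun z => 1 / (4 * (z + Complex.I)) + Complex.I / (2 * (z + Complex.I) ^ 2))
    (fun z hz => by
      have h := shiftI_ne z hz
      refine DifferentiableAt.add (DifferentiableAt.div (by fun_prop) (by fun_prop) ?_)
        (DifferentiableAt.div (by fun_prop) (by fun_prop) ?_)
      · exact mul_ne_zero (by norm_num) h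
      · exact mul_ne_zero (by norm_num) (pow_ne_zero _ h)) 1
    (fun z hz => by
      obtain ⟨h1, h2⟩ := shiftI_bound z hz
      have hp : 0 < ‖z + Complex.I‖ := by linarith
      have h3 : ‖1 / (4 * (z + Complex.I)) + Complex.I / (2 * (z + Complex.I) ^ 2)‖
          ≤ 1 / ‖z + Complex.I‖ := by
        refine (norm_add_le _ _).trans ?_
        simp only [norm_div, norm_mul, norm_pow, Complex.norm_I, norm_one, Complex.norm_ofNat]
        generalize ‖z + Complex.I‖ = r at *
        rw [div_add_div _ _ (by positivity) (by positivity), div_le_div_iff₀ (by positivity) hp]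
        nlinarith [mul_pos hp hp, mul_nonneg (mul_pos hp hp).le (sub_nonneg.2 h2)]
      calc _ ≤ ‖z + Complex.I‖ * (1 / ‖z + Complex.I‖) := by gcongr
        _ = 1 := by field_simp)
  refine this.congr fun R => ?_
  unfold truncFT
  congr 1; funext x
  rw [hfun_formula]
  congr 2
  push_cast; ring

lemma trunc_diff (ξ : ℝ) (hξ : 0 < ξ) :
    Tendsto (truncFT (fun x => (‖eta x‖ : ℂ) ^ 2 * eta x - hfun x) ξ) atTop (nhds 0) := by
  have := jordan_aux ξ hξ (fun z => 1 / (4 * (z + Complex.I)))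
    (fun z hz => by
      have h := shiftI_ne z hz
      refine (DifferentiableAt.div (by fun_prop) (by fun_prop) ?_)
      exact mul_ne_zero (by norm_num) h) 1
    (fun z hz => by
      obtain ⟨h1, h2⟩ := shiftI_bound z hz
      have hp : 0 < ‖z + Complex.I‖ := by linarith
      simp only [norm_div, norm_mul, norm_one, Complex.norm_ofNat]
      rw [mul_one_div, div_le_one (by positivity)]
      linarith)
  refine this.congr fun R => ?_
  unfold truncFT
  have h := intervalIntegral.integral_comp_neg (a := -R) (b := R)
    (fun x : ℝ => Complex.exp (-(Complex.I * x * ξ)) * ((‖eta x‖ : ℂ) ^ 2 * eta x - hfun x))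
  rw [neg_neg] at h
  rw [← h]
  congr 1; funext x
  rw [diff_formula]
  have e : -(1 / (4 * (((-x : ℝ) : ℂ) - Complex.I))) = 1 / (4 * (x + Complex.I)) := by
    rw [show (4 * (((-x : ℝ) : ℂ) - Complex.I)) = -(4 * (x + Complex.I)) by push_cast; ring,
      div_neg, neg_neg]
  rw [e]
  congr 2
  push_cast; ring

lemma trunc_cubic (ξ : ℝ) :
    ∃ L, Tendsto (truncFT (fun x => (‖eta x‖ : ℂ) ^ 2 * eta x) ξ) atTop (nhds L) := by
  refine ⟨_, intervalIntegral_tendsto_integral ?_ tendsto_neg_atTop_atBot tendsto_id⟩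
  have hc := eta_cont
  refine integrable_inv_one_add_sq.mono' (Continuous.aestronglyMeasurable (by fun_prop))
    (Eventually.of_forall fun x => ?_)
  have h1 : ‖eta x‖ ≤ 1 := by
    rw [eta, norm_div, norm_one, div_le_one (by linarith [(shiftI_bound x (by simp)).2])]
    exact (shiftI_bound x (by simp)).2
  have h2 : ‖eta x‖ ^ 2 = (1 + x ^ 2)⁻¹ := by
    rw [eta, norm_div, norm_one, div_pow, Complex.sq_norm, Complex.normSq_apply]
    simp; ring
  have h3 : ‖Complex.exp (-(Complex.I * x * ξ))‖ = 1 := by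
    rw [Complex.norm_exp]; simp
  rw [norm_mul, h3, norm_mul, norm_pow, Complex.norm_real, norm_norm, h2, one_mul]
  exact mul_le_of_le_one_right (by positivity) h1

/-- `Π(|η|²η) = h`, i.e. `(i/2)η' + Π(|η|²η) - η/4 = 0`:
`η` is a critical point of the energy functional. -/
theorem statement14 :
    (∀ x : ℝ, hfun x = 1 / (4 * ((x : ℂ) + Complex.I))
        + Complex.I / (2 * ((x : ℂ) + Complex.I) ^ 2)) ∧
    -- the Fourier transform of h is supported in [0,∞)
    (∀ ξ : ℝ, ξ < 0 → FT hfun ξ = 0) ∧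
    -- |η|²η - h = -1/(4(x-i)), whose Fourier transform is supported in (-∞,0]
    (∀ x : ℝ, (‖eta x‖ : ℂ) ^ 2 * eta x - hfun x = -(1 / (4 * ((x : ℂ) - Complex.I)))) ∧
    (∀ ξ : ℝ, 0 < ξ → FT (fun x => (‖eta x‖ : ℂ) ^ 2 * eta x - hfun x) ξ = 0) ∧
    -- consequently Π(|η|²η) = h
    SzegoProjEq (fun x => (‖eta x‖ : ℂ) ^ 2 * eta x) hfun := by
  refine ⟨hfun_formula, fun ξ hξ => (trunc_h ξ hξ).limUnder_eq, diff_formula,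
    fun ξ hξ => (trunc_diff ξ hξ).limUnder_eq, ?_⟩
  have h0 : ∀ᵐ ξ : ℝ ∂MeasureTheory.volume, ξ ≠ 0 := by
    simp [ae_iff]
  filter_upwards [h0] with ξ hξ
  rcases lt_or_gt_of_ne hξ with h | h
  · rw [if_neg (not_le.2 h)]
    exact (trunc_h ξ h).limUnder_eq
  · rw [if_pos h.le]
    obtain ⟨L, hL⟩ := trunc_cubic ξ
    have hh : Tendsto (truncFT hfun ξ) atTop (nhds L) := by
      have := hL.sub (trunc_diff ξ h)
      rw [sub_zero] at this
      refine this.congr fun R => ?_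
      have hc := eta_cont
      have hc' := hfun_cont
      unfold truncFT
      rw [← intervalIntegral.integral_sub (Continuous.intervalIntegrable (by fun_prop) _ _)
        (Continuous.intervalIntegrable (by fun_prop) _ _)]
      congr 1; funext x; ring
    exact hh.limUnder_eq.trans hL.limUnder_eq.symm
end
end
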